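/- Let E be a real inner product space, let K ≥ 1, and let ĝ_1, …, ĝ_K ∈ E. Suppose α* ∈ Δ^K minimizes the function α ↦ ‖∑_{k=1}^K α_k ĝ_k‖² over the probability simplex Δ^K, and set d* = ∑_{k=1}^K α*_k ĝ_k. Then for every k, ⟨ĝ_k, d*⟩ ≥ ‖d*‖². In particular, if d* ≠ 0 then ⟨ĝ_k, d*⟩ > 0 for every k, so −d* is a common descent direction: the update direction improves all reward objectives simultaneously. -/

import Mathlib

open RealInnerProductSpace

/-- **The harmonized direction is a common descent direction (Désidéri).**
If `α*` minimizes `α ↦ ‖∑ k, α k • ĝ k‖²` over the probability simplex and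
`d* = ∑ k, α* k • ĝ k`, then `⟪ĝ k, d*⟫ ≥ ‖d*‖²` for every `k`; in particular, if
`d* ≠ 0` then `⟪ĝ k, d*⟫ > 0` for every `k`, so `−d*` improves all rewards. -/
theorem marble_harmonized_direction_common_descent
    {E : Type*} [NormedAddCommGroup E] [InnerProductSpace ℝ E]
    (K : ℕ) (hK : 1 ≤ K)
    (g : Fin K → E)
    (αstar : Fin K → ℝ) (hαstar0 : ∀ k, 0 ≤ αstar k) (hαstar1 : ∑ k, αstar k = 1)
    (hmin : ∀ α : Fin K → ℝ, (∀ k, 0 ≤ α k) → ∑ k, α k = 1 →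
      ‖∑ k, αstar k • g k‖ ^ 2 ≤ ‖∑ k, α k • g k‖ ^ 2)
    (d : E) (hd : d = ∑ k, αstar k • g k) :
    (∀ k, ⟪g k, d⟫ ≥ ‖d‖ ^ 2) ∧ (d ≠ 0 → ∀ k, 0 < ⟪g k, d⟫) := by
  have key : ∀ k, ⟪g k, d⟫ ≥ ‖d‖ ^ 2 := by
    intro k
    have step : ∀ t : ℝ, 0 ≤ t → t ≤ 1 →
        0 ≤ 2 * t * ⟪d, g k - d⟫ + t ^ 2 * ‖g k - d‖ ^ 2 := by
      intro t ht0 ht1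
      have h := hmin (fun j => (1 - t) * αstar j + t * (if j = k then 1 else 0))
        (by
          intro j
          have h1 := mul_nonneg (sub_nonneg.2 ht1) (hαstar0 j)
          split_ifs <;> linarith)
        (by
          rw [Finset.sum_add_distrib, ← Finset.mul_sum, ← Finset.mul_sum, hαstar1]
          simp)
      have e : ∑ j, ((1 - t) * αstar j + t * (if j = k then (1 : ℝ) else 0)) • g j
          = d + t • (g k - d) := by
        simp only [add_smul, mul_smul, Finset.sum_add_distrib, ← Finset.smul_sum, ← hd,
          ite_smul, one_smul, zero_smul, Finset.sum_ite_eq', Finset.mem_univ, if_true]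
        module
      rw [e, ← hd, norm_add_sq_real, inner_smul_right, norm_smul, mul_pow,
        Real.norm_eq_abs, sq_abs] at h
      linarith
    have hi : ⟪d, g k - d⟫ = ⟪g k, d⟫ - ‖d‖ ^ 2 := by
      rw [inner_sub_right, real_inner_self_eq_norm_sq, real_inner_comm]
    by_contra hc
    have hneg : ⟪d, g k - d⟫ < 0 := by
      rw [hi]
      linarith [not_le.1 hc]
    generalize ⟪d, g k - d⟫ = c at step hneg
    have hN : 0 ≤ ‖g k - d‖ ^ 2 := sq_nonneg _
    generalize ‖g k - d‖ ^ 2 = N at step hN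
    have hp : 0 < N - c := by linarith
    obtain ⟨t, ht⟩ : ∃ t, t = -c / (N - c) := ⟨_, rfl⟩
    have ht0 : 0 < t := by
      rw [ht]
      exact div_pos (by linarith) hp
    have ht1 : t ≤ 1 := by
      rw [ht, div_le_one hp]
      linarith
    have hte : t * (N - c) = -c := by
      rw [ht]
      field_simp
    have h := step t ht0.le ht1
    have h2 : 2 * t * c + t ^ 2 * N = t * (c + t * c) := by
      linear_combination t * hte
    have h3 : t * (c + t * c) < 0 :=
      mul_neg_of_pos_of_neg ht0 (by linarith [mul_neg_of_pos_of_neg ht0 hneg])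
    linarith
  refine ⟨key, fun h0 k => lt_of_lt_of_le ?_ (key k)⟩
  have := norm_pos_iff.2 h0
  positivity
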